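/- For all constants c₁, c₂ > 0 there exists a constant c > 0 such that the following holds. If G, H, W, k, n satisfy Assumption (★) with constant c, then G contains an independent arc-system of size at least c₁·k² and length at least c₂·k^{1/5}. -/

import Mathlib

open Finset

/-- `σ` lists the vertices of `G` in the order of a Hamilton cycle `H`:
it is a bijection from `ZMod n` such that consecutive indices give adjacent vertices. -/
def IsHamOrder {V : Type} [Fintype V] (G : SimpleGraph V) (n : ℕ) (σ : ZMod n → V) : Prop :=
  Function.Bijective σ ∧ ∀ i : ZMod n, G.Adj (σ i) (σ (i + 1))

/-- A vertex is problematic if it has degree at most `2k` or belongs to `W`. -/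
def Problematic {V : Type} [Fintype V] [DecidableEq V] (G : SimpleGraph V)
    [DecidableRel G.Adj] (W : Finset V) (k : ℕ) (v : V) : Prop :=
  G.degree v ≤ 2 * k ∨ v ∈ W

/-- `G` has a cycle of length `ℓ` passing through all vertices of `S`. -/
def HasCycleThrough {V : Type} (G : SimpleGraph V) (ℓ : ℕ) (S : Set V) : Prop :=
  ∃ (u : V) (w : G.Walk u u), w.IsCycle ∧ w.length = ℓ ∧ ∀ x ∈ S, x ∈ w.support

/-- Assumption (★) with constant `c`: `G` is a graph on `n` vertices with Hamilton cycle
(order) `σ`, independence number at most `k`, `W` has at most `20k²` vertices, `G` has no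
cycle of length `n − 1` through all of `W`, and `n ≥ c·k^(11/5)`. -/
def StarAssumption {V : Type} [Fintype V] [DecidableEq V] (G : SimpleGraph V) [DecidableRel G.Adj]
    (n k : ℕ) (σ : ZMod n → V) (W : Finset V) (c : ℝ) : Prop :=
  Fintype.card V = n ∧ IsHamOrder G n σ ∧
  (∀ s : Finset V, (∀ u ∈ s, ∀ v ∈ s, u ≠ v → ¬ G.Adj u v) → s.card ≤ k) ∧
  W.card ≤ 20 * k ^ 2 ∧
  ¬ HasCycleThrough G (n - 1) (W : Set V) ∧
  c * (k : ℝ) ^ ((11 : ℝ) / 5) ≤ (n : ℝ)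

/-- Two vertices are consecutive if they are neighbours on the Hamilton cycle. -/
def Consec {V : Type} (n : ℕ) (σ : ZMod n → V) (u v : V) : Prop :=
  ∃ i : ZMod n, (σ i = u ∧ σ (i + 1) = v) ∨ (σ i = v ∧ σ (i + 1) = u)

/-- A continuous set of vertices: one forming a subpath (interval) of the Hamilton cycle. -/
def ContinuousSet {V : Type} [DecidableEq V] (n : ℕ) (σ : ZMod n → V) (S : Finset V) : Prop :=
  ∃ (i : ZMod n) (m : ℕ), S = (Finset.range m).image (fun j : ℕ => σ (i + (j : ZMod n)))

/-- `B` is a continuous closure of `A`: a minimum-size continuous set containing `A`. -/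
def IsClosure {V : Type} [DecidableEq V] (n : ℕ) (σ : ZMod n → V) (A B : Finset V) : Prop :=
  ContinuousSet n σ B ∧ A ⊆ B ∧
    ∀ B' : Finset V, ContinuousSet n σ B' → A ⊆ B' → B.card ≤ B'.card

/-- An arc-system: a family of arcs together with a choice of continuous closure for each
arc, such that closures of distinct arcs are disjoint, closures contain no problematic
vertex, and no arc contains two consecutive vertices. -/
structure ArcSystem {V : Type} [Fintype V] [DecidableEq V] (G : SimpleGraph V)
    [DecidableRel G.Adj] (n k : ℕ) (σ : ZMod n → V) (W : Finset V) where
  arcs : Finset (Finset V)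
  cl : Finset V → Finset V
  closure_spec : ∀ A ∈ arcs, IsClosure n σ A (cl A)
  closures_disjoint : ∀ A ∈ arcs, ∀ B ∈ arcs, A ≠ B → Disjoint (cl A) (cl B)
  no_problematic : ∀ A ∈ arcs, ∀ v ∈ cl A, ¬ Problematic G W k v
  no_consec : ∀ A ∈ arcs, ∀ u ∈ A, ∀ v ∈ A, u ≠ v → ¬ Consec n σ u v

namespace ArcSystem

variable {V : Type} [Fintype V] [DecidableEq V] {G : SimpleGraph V} [DecidableRel G.Adj]
  {n k : ℕ} {σ : ZMod n → V} {W : Finset V}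

/-- An arc-system is independent if every closure has at most `k` vertices. -/
def Independent (𝒜 : ArcSystem G n k σ W) : Prop :=
  ∀ A ∈ 𝒜.arcs, (𝒜.cl A).card ≤ k

/-- Every arc of the system has at least `l` vertices. -/
def LengthGe (𝒜 : ArcSystem G n k σ W) (l : ℕ) : Prop :=
  ∀ A ∈ 𝒜.arcs, l ≤ A.card

end ArcSystem

/-- A vertex set `s` is `M₂`-free (for `G`) if the subgraph induced by `s`
contains no two vertex-disjoint edges. -/
def M2Free {V : Type} (G : SimpleGraph V) (s : Finset V) : Prop :=
  ¬ ∃ a b x y : V, a ∈ s ∧ b ∈ s ∧ x ∈ s ∧ y ∈ s ∧ G.Adj a b ∧ G.Adj x y ∧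
      a ≠ x ∧ a ≠ y ∧ b ≠ x ∧ b ≠ y

namespace ArcSystem

variable {V : Type} [Fintype V] [DecidableEq V] {G : SimpleGraph V} [DecidableRel G.Adj]
  {n k : ℕ} {σ : ZMod n → V} {W : Finset V}

/-- An arc-system is simple if it is independent and any two distinct arcs induce an
`M₂`-free subgraph of `G`. -/
def Simple (𝒜 : ArcSystem G n k σ W) : Prop :=
  𝒜.Independent ∧ ∀ A ∈ 𝒜.arcs, ∀ B ∈ 𝒜.arcs, A ≠ B → M2Free G (A ∪ B)

end ArcSystem

/-- `G[𝒜]` contains an independent set of size at least `m`. -/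
def HasIndepInArcs {V : Type} [Fintype V] [DecidableEq V] (G : SimpleGraph V)
    [DecidableRel G.Adj] {n k : ℕ} {σ : ZMod n → V} {W : Finset V}
    (𝒜 : ArcSystem G n k σ W) (m : ℕ) : Prop :=
  ∃ I : Finset V, (∀ v ∈ I, ∃ A ∈ 𝒜.arcs, v ∈ A) ∧
    (∀ u ∈ I, ∀ v ∈ I, u ≠ v → ¬ G.Adj u v) ∧ m ≤ I.card

/-- The constants `a_p = 10·3^p`. -/
def aP (p : ℕ) : ℕ := 10 * 3 ^ p

/-- The constants `b_p = 1000^p·4^(p²)`. -/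
def bP (p : ℕ) : ℕ := 1000 ^ p * 4 ^ (p ^ 2)


/-- greedy independent set -/
theorem greedy_indep {V : Type} [Fintype V] [DecidableEq V] (G : SimpleGraph V)
    [DecidableRel G.Adj] (D : ℕ) (m : ℕ) : ∀ S : Finset V, S.card ≤ m → (∀ v ∈ S, G.degree v ≤ D) →
    ∃ I ⊆ S, (∀ u ∈ I, ∀ v ∈ I, u ≠ v → ¬ G.Adj u v) ∧ S.card ≤ (D + 1) * I.card := by
  induction m with
  | zero => 
    intro S hS _
    exact ⟨∅, by simp, by simp, by simpa using hS⟩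
  | succ m ih =>
    intro S hS hD
    rcases S.eq_empty_or_nonempty with rfl | ⟨x, hx⟩
    · exact ⟨∅, by simp, by simp, by simp⟩
    have h1 : (S \ (insert x (G.neighborFinset x))).card + 1 ≤ S.card := by
      have : S \ (insert x (G.neighborFinset x)) ⊂ S := by
        refine ⟨sdiff_subset, fun h => ?_⟩
        have := h hx
        simp at this
      exact card_lt_card this
    have h2 : S.card ≤ (S \ (insert x (G.neighborFinset x))).card + (D + 1) := by
      have a := card_le_card_sdiff_add_card (s := S) (t := insert x (G.neighborFinset x))
      have b := card_insert_le x (G.neighborFinset x)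
      have e := hD x hx
      rw [← G.card_neighborFinset_eq_degree] at e
      omega
    obtain ⟨I, hI, hind, hc⟩ := ih (S \ (insert x (G.neighborFinset x))) (by omega)
      (fun v hv => hD v (sdiff_subset hv))
    have hxI : x ∉ I := fun h => by
      have := hI h
      simp at this
    have hn : ∀ v ∈ I, ¬ G.Adj x v := fun v hv h => by
      have := hI hv
      simp [h] at this
    refine ⟨insert x I, ?_, ?_, ?_⟩
    · intro v hv
      rcases mem_insert.1 hv with rfl | hv
      · exact hx
      · exact sdiff_subset (hI hv)
    · intro u hu v hv huv
      rcases mem_insert.1 hu with rfl | hu1 <;> rcases mem_insert.1 hv with rfl | hv1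
      · exact absurd rfl huv
      · exact hn v hv1
      · exact fun h => hn u hu1 h.symm
      · exact hind u hu1 v hv1 huv
    · rw [card_insert_of_notMem hxI]
      nlinarith

theorem ramsey2 (s t : ℕ) : ∃ N : ℕ, ∀ (S : Finset ℕ) (r : ℕ → ℕ → Prop), (∀ a b, r a b → r b a) →
    N ≤ S.card → (∃ T ⊆ S, T.card = s ∧ ∀ a ∈ T, ∀ b ∈ T, a ≠ b → r a b) ∨
      (∃ T ⊆ S, T.card = t ∧ ∀ a ∈ T, ∀ b ∈ T, a ≠ b → ¬ r a b) := by
  classical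
  induction s generalizing t with
  | zero => exact ⟨0, fun S r _ _ => Or.inl ⟨∅, by simp, by simp, by simp⟩⟩
  | succ s ihs =>
    induction t with
    | zero => exact ⟨0, fun S r _ _ => Or.inr ⟨∅, by simp, by simp, by simp⟩⟩
    | succ t iht =>
      obtain ⟨N1, h1⟩ := ihs (t + 1)
      obtain ⟨N2, h2⟩ := iht
      refine ⟨N1 + N2 + 1, fun S r hr hS => ?_⟩
      obtain ⟨x, hx⟩ : S.Nonempty := card_pos.1 (by omega)
      have hc : ((S.erase x).filter (fun y => r x y)).card
          + ((S.erase x).filter (fun y => ¬ r x y)).card = S.card - 1 := by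
        rw [card_filter_add_card_filter_not, card_erase_of_mem hx]
      have ext : ∀ (q : ℕ → ℕ → Prop) (m : ℕ), (∀ a b, q a b → q b a) →
          (∃ T ⊆ (S.erase x).filter (fun y => q x y), T.card = m ∧
            ∀ a ∈ T, ∀ b ∈ T, a ≠ b → q a b) →
          ∃ T ⊆ S, T.card = m + 1 ∧ ∀ a ∈ T, ∀ b ∈ T, a ≠ b → q a b := by
        rintro q m hq ⟨T, hT, hm, hTq⟩
        have hT' : ∀ y ∈ T, y ≠ x ∧ y ∈ S ∧ q x y := fun y hy => by
          have := hT hy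
          simp at this
          tauto
        refine ⟨insert x T, ?_, ?_, ?_⟩
        · intro v hv
          rcases mem_insert.1 hv with rfl | hv
          · exact hx
          · exact (hT' v hv).2.1
        · rw [card_insert_of_notMem (fun h => (hT' x h).1 rfl), hm]
        · intro u hu v hv huv
          rcases mem_insert.1 hu with rfl | hu1 <;> rcases mem_insert.1 hv with rfl | hv1
          · exact absurd rfl huv
          · exact (hT' v hv1).2.2
          · exact hq _ _ (hT' u hu1).2.2
          · exact hTq u hu1 v hv1 huv
      have hsub : ∀ p : ℕ → Prop, ∀ [DecidablePred p], (S.erase x).filter p ⊆ S := fun p _ =>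
        (filter_subset _ _).trans (erase_subset _ _)
      rcases Nat.lt_or_ge ((S.erase x).filter (fun y => r x y)).card N1 with hlt | hge
      · rcases h2 ((S.erase x).filter (fun y => ¬ r x y)) r hr (by omega) with h | h
        · left
          obtain ⟨T, hT, h⟩ := h
          exact ⟨T, hT.trans (hsub _), h⟩
        · right
          exact ext (fun a b => ¬ r a b) t (fun a b h h' => h (hr _ _ h')) (by convert h)
      · rcases h1 ((S.erase x).filter (fun y => r x y)) r hr hge with h | h
        · left
          exact ext r s hr h
        · right
          obtain ⟨T, hT, h⟩ := h
          exact ⟨T, hT.trans (hsub _), h⟩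

theorem ramsey_multi (k L : ℕ) : ∃ N : ℕ, ∀ (S : Finset ℕ) (r : ℕ → ℕ → ℕ → Prop),
    (∀ p a b, r p a b → r p b a) → N ≤ S.card →
    (∀ p < L, ∀ T ⊆ S, (∀ a ∈ T, ∀ b ∈ T, a ≠ b → ¬ r p a b) → T.card ≤ k) →
    ∃ i ∈ S, ∃ j ∈ S, i < j ∧ ∀ p < L, r p i j := by
  induction L with
  | zero =>
    refine ⟨2, fun S r _ hS _ => ?_⟩
    obtain ⟨a, ha, b, hb, hab⟩ := one_lt_card.1 (show 1 < S.card by omega)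
    rcases lt_or_gt_of_ne hab with h | h
    · exact ⟨a, ha, b, hb, h, by simp⟩
    · exact ⟨b, hb, a, ha, h, by simp⟩
  | succ L ih =>
    obtain ⟨N, hN⟩ := ih
    obtain ⟨M, hM⟩ := ramsey2 N (k + 1)
    refine ⟨M, fun S r hr hS hind => ?_⟩
    rcases hM S (r L) (hr L) hS with ⟨T, hT, hc, h⟩ | ⟨T, hT, hc, h⟩
    · obtain ⟨i, hi, j, hj, hij, hp⟩ := hN T r hr hc.ge
        (fun p hp T' hT' => hind p (by omega) T' (hT'.trans hT))
      refine ⟨i, hT hi, j, hT hj, hij, fun p hpL => ?_⟩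
      rcases Nat.lt_succ_iff_lt_or_eq.1 hpL with h' | rfl
      · exact hp p h'
      · exact h i hi j hj hij.ne
    · have := hind L (by omega) T hT h
      omega

theorem good_blocks {V : Type} [DecidableEq V] (n L : ℕ) (hL : 0 < L) (σ : ZMod n → V)
    (hσ : Function.Injective σ) (P : Finset V) :
    n / L ≤ ((range (n / L)).filter
      (fun j => ∀ a < L, σ ((j * L + a : ℕ) : ZMod n) ∉ P)).card + P.card := by
  classical
  have h := card_filter_add_card_filter_not (s := range (n / L))
    (fun j => ∀ a < L, σ ((j * L + a : ℕ) : ZMod n) ∉ P)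
  rw [card_range] at h
  have h2 : ((range (n / L)).filter
      (fun j => ¬ ∀ a < L, σ ((j * L + a : ℕ) : ZMod n) ∉ P)).card ≤ P.card := by
    have : ∀ j : ℕ, ∃ a : ℕ, (¬ ∀ a < L, σ ((j * L + a : ℕ) : ZMod n) ∉ P) →
        a < L ∧ σ ((j * L + a : ℕ) : ZMod n) ∈ P := by
      intro j
      by_cases hj : ∀ a < L, σ ((j * L + a : ℕ) : ZMod n) ∉ P
      · exact ⟨0, fun h => absurd hj h⟩
      · push Not at hj
        obtain ⟨a, ha⟩ := hj
        exact ⟨a, fun _ => ha⟩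
    choose f hf using this
    refine card_le_card_of_injOn (fun j => σ ((j * L + f j : ℕ) : ZMod n)) ?_ ?_
    · intro j hj
      exact (hf j (by simpa using (mem_filter.1 hj).2)).2
    · intro i hi j hj hij
      have hi' := (hf i (mem_filter.1 hi).2).1
      have hj' := (hf j (mem_filter.1 hj).2).1
      have hi2 := mem_range.1 (mem_filter.1 hi).1
      have hj2 := mem_range.1 (mem_filter.1 hj).1
      have key : ∀ j, j < n / L → f j < L → j * L + f j < n := by
        intro j hj hf
        have : (j + 1) * L ≤ n := le_trans (Nat.mul_le_mul_right L hj) (Nat.div_mul_le_self n L)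
        nlinarith
      have e := hσ hij
      rw [ZMod.natCast_eq_natCast_iff'] at e
      rw [Nat.mod_eq_of_lt (key i hi2 hi'), Nat.mod_eq_of_lt (key j hj2 hj')] at e
      have := congrArg (· / L) e
      simpa [Nat.add_div_of_dvd_right, Nat.div_eq_of_lt, hi', hj', hL, Nat.add_comm,
        Nat.add_mul_div_right] using this
  omega
theorem seg_walk {V : Type} (G : SimpleGraph V) (τ : ℕ → V) (h : ∀ i, G.Adj (τ i) (τ (i + 1)))
    (a l : ℕ) : ∃ w : G.Walk (τ a) (τ (a + l)), w.support = (List.range' a (l + 1)).map τ := by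
  induction l generalizing a with
  | zero => exact ⟨.nil, by simp⟩
  | succ l ih =>
    obtain ⟨w, hw⟩ := ih (a + 1)
    have e : a + 1 + l = a + (l + 1) := by omega
    refine ⟨.cons (h a) (w.copy rfl (by rw [e])), ?_⟩
    rw [SimpleGraph.Walk.support_cons, SimpleGraph.Walk.support_copy, hw, List.range'_succ (s := a) (n := l + 1),
      List.map_cons]

theorem zig_walk {V : Type} (G : SimpleGraph V) (τ : ℕ → V) (h : ∀ i, G.Adj (τ i) (τ (i + 1)))
    (d m a : ℕ) (hd : ∀ r, a ≤ r → r < a + 2 * m → G.Adj (τ r) (τ (d + r))) :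
    ∃ w : G.Walk (τ (d + a)) (τ (d + a + 2 * m)),
      w.support.Perm ((List.range' (d + a) (2 * m + 1)).map τ ++ (List.range' a (2 * m)).map τ) := by
  induction m generalizing a with
  | zero => exact ⟨.nil, by simp⟩
  | succ m ih =>
    obtain ⟨w, hw⟩ := ih (a + 2) (fun r h1 h2 => hd r (by omega) (by omega))
    have e : d + (a + 2) + 2 * m = d + a + 2 * (m + 1) := by omega
    refine ⟨.cons (hd a (by omega) (by omega)).symm (.cons (h a) (.cons
      (hd (a + 1) (by omega) (by omega)) (.cons (h (d + (a + 1)))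
        (w.copy rfl (by rw [e]))))), ?_⟩
    simp only [SimpleGraph.Walk.support_cons, SimpleGraph.Walk.support_copy]
    have e1 : 2 * (m + 1) + 1 = (2 * m + 1) + 1 + 1 := by omega
    have e2 : 2 * (m + 1) = (2 * m) + 1 + 1 := by omega
    rw [e1, e2, List.range'_succ, List.range'_succ, List.range'_succ (s := a), List.range'_succ (s := a + 1)]
    have e3 : d + a + 1 + 1 = d + (a + 2) := by omega
    have e4 : d + (a + 1) = d + a + 1 := by omega
    have e5 : List.range' (a + 1 + 1) (2 * m) = List.range' (a + 2) (2 * m) := rfl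
    rw [e3, e4, e5]
    simp only [List.map_cons, List.cons_append]
    refine List.Perm.cons _ ?_
    have p1 := ((hw.cons (τ (d + a + 1))).cons (τ (a + 1))).cons (τ a)
    refine p1.trans ?_
    classical
    rw [List.perm_iff_count]
    intro x
    simp only [List.count_cons, List.count_append]
    omega

theorem cycle_of_blocks {V : Type} (G : SimpleGraph V) (τ : ℕ → V) (n : ℕ)
    (h : ∀ i, G.Adj (τ i) (τ (i + 1))) (hper : τ n = τ 0)
    (hinj : ∀ i < n, ∀ j < n, τ i = τ j → i = j)
    (hsurj : ∀ v, ∃ i < n, τ i = v) (W : Set V)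
    (p m d : ℕ) (hpd : p + 2 * m + 2 < d) (hdn : d + p + 2 * m + 2 < n)
    (hch : G.Adj (τ p) (τ (p + 2 * m + 2)))
    (hd : ∀ r, r < p + 2 * m + 2 → G.Adj (τ r) (τ (d + r)))
    (hW : τ (p + 2 * m + 1) ∉ W) : HasCycleThrough G (n - 1) W := by
  obtain ⟨w1, h1⟩ := seg_walk G τ h 0 p
  obtain ⟨w2, h2⟩ := seg_walk G τ h (p + 2 * m + 2) (d + (p + 1) - (p + 2 * m + 2) - 1)
  obtain ⟨w3, h3⟩ := zig_walk G τ h d m (p + 1) (fun r _ h2 => hd r (by omega))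
  obtain ⟨w4, h4⟩ := seg_walk G τ h (d + (p + 1) + 2 * m + 1) (n - 1 - (d + (p + 1) + 2 * m + 1))
  have e2 : p + 2 * m + 2 + (d + (p + 1) - (p + 2 * m + 2) - 1) + 1 = d + (p + 1) := by omega
  have e4 : d + (p + 1) + 2 * m + 1 + (n - 1 - (d + (p + 1) + 2 * m + 1)) + 1 = n := by omega
  have a1 : G.Adj (τ (0 + p)) (τ (p + 2 * m + 2)) := by simpa using hch
  have a2 := h (p + 2 * m + 2 + (d + (p + 1) - (p + 2 * m + 2) - 1))
  rw [e2] at a2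
  have a3 := h (d + (p + 1) + 2 * m)
  have a4 := h (d + (p + 1) + 2 * m + 1 + (n - 1 - (d + (p + 1) + 2 * m + 1)))
  rw [e4, hper] at a4
  let w := w1.append (.cons a1 (w2.append (.cons a2 (w3.append (.cons a3 w4)))))
  have hw : w.support = w1.support ++ (w2.support ++ (w3.support ++ w4.support)) := by
    simp [w, SimpleGraph.Walk.support_append]
  have hperm : (τ (p + 2 * m + 1) :: w.support).Perm ((List.range n).map τ) := by
    have hr : List.range n = List.range' 0 (p + 1) ++ (List.range' (p + 1) (2 * m) ++
        ((p + 2 * m + 1) :: (List.range' (p + 2 * m + 2) (d + (p + 1) - (p + 2 * m + 2)) ++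
        (List.range' (d + (p + 1)) (2 * m + 1) ++
          List.range' (d + (p + 1) + 2 * m + 1) (n - (d + (p + 1) + 2 * m + 1)))))) := by
      rw [List.range_eq_range']
      have s1 : d + (p + 1) + 2 * m + 1 = d + (p + 1) + (2 * m + 1) := by omega
      rw [s1, List.range'_append_1]
      have s2 : List.range' (d + (p + 1)) (2 * m + 1 + (n - (d + (p + 1) + (2 * m + 1))))
        = List.range' (p + 2 * m + 2 + (d + (p + 1) - (p + 2 * m + 2)))
          (2 * m + 1 + (n - (d + (p + 1) + (2 * m + 1)))) := by
        congr 1; omega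
      have s5 : p + 2 * m + 2 = p + 2 * m + 1 + 1 := rfl
      rw [s2, List.range'_append_1, s5, ← List.range'_succ (s := p + 2 * m + 1) (step := 1)]
      have s3 : p + 2 * m + 1 = p + 1 + 2 * m := by omega
      rw [s3, List.range'_append_1]
      have s4 : ∀ l, List.range' (p + 1) l = List.range' (0 + (p + 1)) l := by simp
      rw [s4, List.range'_append_1]
      congr 1
      omega
    have g2 : d + (p + 1) - (p + 2 * m + 2) - 1 + 1 = d + (p + 1) - (p + 2 * m + 2) := by omega
    have g4 : n - 1 - (d + (p + 1) + 2 * m + 1) + 1 = n - (d + (p + 1) + 2 * m + 1) := by omega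
    rw [g2] at h2
    rw [g4] at h4
    rw [hw, hr, h1, h2, h4]
    classical
    rw [List.perm_iff_count] at h3 ⊢
    intro x
    have := h3 x
    simp only [List.count_cons, List.count_append, List.map_append, List.map_cons] at this ⊢
    omega
  have hnd : ((List.range n).map τ).Nodup := by
    refine List.Nodup.map_on ?_ List.nodup_range
    intro i hi j hj hij
    exact hinj i (List.mem_range.1 hi) j (List.mem_range.1 hj) hij
  have hnd' := hperm.nodup_iff.2 hnd
  have hlen : w.support.length = n - 1 := by
    have := hperm.length_eq
    simp only [List.length_cons, List.length_map, List.length_range] at this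
    omega
  have hlen2 : w.length = n - 2 := by
    rw [SimpleGraph.Walk.length_support] at hlen
    omega
  refine ⟨_, .cons a4 w, ?_, ?_, ?_⟩
  · rw [SimpleGraph.Walk.isCycle_iff_isPath_tail_and_le_length]
    constructor
    · simp only [SimpleGraph.Walk.tail_cons]
      simpa [SimpleGraph.Walk.isPath_def] using (List.nodup_cons.1 hnd').2
    · rw [SimpleGraph.Walk.length_cons]; omega
  · rw [SimpleGraph.Walk.length_cons]; omega
  · intro x hx
    obtain ⟨i, hi, rfl⟩ := hsurj x
    have : τ i ∈ τ (p + 2 * m + 1) :: w.support :=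
      hperm.mem_iff.2 (List.mem_map.2 ⟨i, List.mem_range.2 hi, rfl⟩)
    rcases List.mem_cons.1 this with e | e
    · exact absurd (e ▸ hx) hW
    · rw [SimpleGraph.Walk.support_cons]
      exact List.mem_cons_of_mem _ e

theorem small_case (k : ℕ) : ∃ N : ℕ, ∀ (V : Type) [Fintype V] [DecidableEq V]
    (G : SimpleGraph V) (n : ℕ) (σ : ZMod n → V) (W : Finset V), 0 < n → N ≤ n →
    IsHamOrder G n σ →
    (∀ s : Finset V, (∀ u ∈ s, ∀ v ∈ s, u ≠ v → ¬ G.Adj u v) → s.card ≤ k) →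
    W.card ≤ 20 * k ^ 2 → HasCycleThrough G (n - 1) (W : Set V) := by
  classical
  obtain ⟨M, hM⟩ := ramsey_multi k (2 * k + 1)
  refine ⟨(M + 20 * k ^ 2) * (2 * k + 1), ?_⟩
  intro V _ _ G n σ W hn0 hn hσ hind hW
  have : NeZero n := ⟨hn0.ne'⟩
  obtain ⟨hbij, hadj⟩ := hσ
  set K := 2 * k + 1 with hK
  have hgood := good_blocks n K (by omega) σ hbij.1 W
  set S := (range (n / K)).filter (fun j => ∀ a < K, σ ((j * K + a : ℕ) : ZMod n) ∉ W) with hS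
  have hdiv : M + 20 * k ^ 2 ≤ n / K := (Nat.le_div_iff_mul_le (by omega)).2 hn
  have hlt : ∀ j ∈ S, ∀ a < K, j * K + a < n := by
    intro j hj a ha
    have hj := mem_range.1 (mem_filter.1 hj).1
    have : (j + 1) * K ≤ n := le_trans (Nat.mul_le_mul_right K hj) (Nat.div_mul_le_self n K)
    nlinarith
  have hinjN : ∀ x < n, ∀ y < n, σ (x : ZMod n) = σ (y : ZMod n) → x = y := by
    intro x hx y hy h
    have e := hbij.1 h
    rwa [ZMod.natCast_eq_natCast_iff', Nat.mod_eq_of_lt hx, Nat.mod_eq_of_lt hy] at e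
  obtain ⟨i, hi, j, hj, hij, hr⟩ := hM S
    (fun p a b => G.Adj (σ ((a * K + p : ℕ) : ZMod n)) (σ ((b * K + p : ℕ) : ZMod n)))
    (fun p a b h => h.symm) (by omega) (by
      intro p hp T hT hTi
      have hc : (T.image (fun a => σ ((a * K + p : ℕ) : ZMod n))).card = T.card := by
        apply card_image_of_injOn
        intro a ha b hb hab
        have := hinjN _ (hlt a (hT ha) p hp) _ (hlt b (hT hb) p hp) hab
        exact Nat.eq_of_mul_eq_mul_right (show 0 < K by omega) (by omega)
      rw [← hc]
      apply hind
      intro u hu v hv huv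
      obtain ⟨a, ha, rfl⟩ := mem_image.1 hu
      obtain ⟨b, hb, rfl⟩ := mem_image.1 hv
      exact hTi a ha b hb (fun h => huv (by rw [h])))
  obtain ⟨a, b, hab, hbk, hch⟩ : ∃ a b : ℕ, a < b ∧ b < k + 1 ∧
      G.Adj (σ ((i * K + 2 * a : ℕ) : ZMod n)) (σ ((i * K + 2 * b : ℕ) : ZMod n)) := by
    by_contra hno
    have hc : ((range (k + 1)).image (fun a => σ ((i * K + 2 * a : ℕ) : ZMod n))).card = k + 1 := by
      rw [card_image_of_injOn, card_range]
      intro a ha b hb hab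
      have ha := mem_range.1 (mem_coe.1 ha)
      have hb := mem_range.1 (mem_coe.1 hb)
      have := hinjN _ (hlt i hi (2 * a) (by omega)) _ (hlt i hi (2 * b) (by omega)) hab
      omega
    have := hind ((range (k + 1)).image (fun a => σ ((i * K + 2 * a : ℕ) : ZMod n))) (by
      intro u hu v hv huv had
      obtain ⟨a, ha, rfl⟩ := mem_image.1 hu
      obtain ⟨b, hb, rfl⟩ := mem_image.1 hv
      have ha := mem_range.1 ha
      have hb := mem_range.1 hb
      rcases lt_trichotomy a b with h | h | h
      · exact hno ⟨a, b, h, hb, had⟩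
      · exact huv (by rw [h])
      · exact hno ⟨b, a, h, ha, had.symm⟩)
    omega
  have hdK : i * K + (j - i) * K = j * K := by
    rw [← Nat.add_mul]; congr 1; omega
  have hKd : K ≤ (j - i) * K := Nat.le_mul_of_pos_left K (by omega)
  have hb2 : 2 * a + 2 * (b - a - 1) + 2 = 2 * b := by omega
  refine cycle_of_blocks G (fun t => σ ((i * K + t : ℕ) : ZMod n)) n ?_ ?_ ?_ ?_ (W : Set V)
    (2 * a) (b - a - 1) ((j - i) * K) ?_ ?_ ?_ ?_ ?_
  · intro t
    have := hadj ((i * K + t : ℕ) : ZMod n)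
    simpa [add_assoc] using this
  · simp
  · intro x hx y hy hxy
    have e := hbij.1 hxy
    rw [ZMod.natCast_eq_natCast_iff] at e
    have e' := Nat.ModEq.add_left_cancel' _ e
    exact Nat.ModEq.eq_of_lt_of_lt e' hx hy
  · intro v
    obtain ⟨z, rfl⟩ := hbij.2 v
    refine ⟨(z - ((i * K : ℕ) : ZMod n)).val, ZMod.val_lt _, ?_⟩
    simp
  · omega
  · have := hlt j hj (2 * b) (by omega)
    omega
  · simp only [hb2]
    exact hch
  · intro r hrr
    have := hr r (by omega)
    rwa [← add_assoc, hdK]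
  · have := (mem_filter.1 hi).2 (2 * a + 2 * (b - a - 1) + 1) (by omega)
    exact this

theorem large_case {V : Type} [Fintype V] [DecidableEq V] (G : SimpleGraph V)
    [DecidableRel G.Adj] (n k : ℕ) (σ : ZMod n → V) (W : Finset V) (t : ℕ) (ht : 1 ≤ t)
    (htk : 2 * t ≤ k) (htn : 4 * t ≤ n) (hσ : IsHamOrder G n σ)
    (hind : ∀ s : Finset V, (∀ u ∈ s, ∀ v ∈ s, u ≠ v → ¬ G.Adj u v) → s.card ≤ k)
    (hW : W.card ≤ 20 * k ^ 2) :
    ∃ 𝒜 : ArcSystem G n k σ W, 𝒜.Independent ∧ n / (2 * t) ≤ 𝒜.arcs.card + 23 * k ^ 2 ∧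
      ∀ A ∈ 𝒜.arcs, A.card = t := by
  classical
  have : NeZero n := ⟨by omega⟩
  obtain ⟨hbij, -⟩ := hσ
  set P : Finset V := univ.filter (fun v => Problematic G W k v) with hP
  have hPc : P.card ≤ 23 * k ^ 2 := by
    obtain ⟨I, -, hI, hc⟩ := greedy_indep G (2 * k) _ (univ.filter (fun v => G.degree v ≤ 2 * k))
      le_rfl (by simp)
    have h1 := hind I hI
    have h2 : P ⊆ (univ.filter (fun v => G.degree v ≤ 2 * k)) ∪ W := by
      intro v hv
      have := (mem_filter.1 hv).2
      simpa [Problematic] using this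
    have h3 := (card_le_card h2).trans (card_union_le _ _)
    have h4 : (2 * k + 1) * I.card ≤ (2 * k + 1) * k := Nat.mul_le_mul_left _ h1
    nlinarith
  set K := 2 * t with hK
  have hgood := good_blocks n K (by omega) σ hbij.1 P
  set S := (range (n / K)).filter (fun j => ∀ a < K, σ ((j * K + a : ℕ) : ZMod n) ∉ P) with hS
  have hlt : ∀ j ∈ S, ∀ a < K, j * K + a < n := by
    intro j hj a ha
    have hj := mem_range.1 (mem_filter.1 hj).1
    have : (j + 1) * K ≤ n := le_trans (Nat.mul_le_mul_right K hj) (Nat.div_mul_le_self n K)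
    nlinarith
  have hinjN : ∀ x < n, ∀ y < n, σ (x : ZMod n) = σ (y : ZMod n) → x = y := by
    intro x hx y hy h
    have e := hbij.1 h
    rwa [ZMod.natCast_eq_natCast_iff', Nat.mod_eq_of_lt hx, Nat.mod_eq_of_lt hy] at e
  let arc : ℕ → Finset V := fun j => (range t).image (fun a => σ ((j * K + 2 * a : ℕ) : ZMod n))
  let C : ℕ → Finset V := fun j => (range (2 * t - 1)).image
    (fun a => σ ((j * K + a : ℕ) : ZMod n))
  have harcC : ∀ j, arc j ⊆ C j := by
    intro j v hv
    obtain ⟨a, ha, rfl⟩ := mem_image.1 hv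
    have ha := mem_range.1 ha
    exact mem_image.2 ⟨2 * a, mem_range.2 (by omega), rfl⟩
  have harcc : ∀ j ∈ S, (arc j).card = t := by
    intro j hj
    rw [card_image_of_injOn, card_range]
    intro a ha b hb hab
    have ha := mem_range.1 (mem_coe.1 ha)
    have hb := mem_range.1 (mem_coe.1 hb)
    have := hinjN _ (hlt j hj (2 * a) (by omega)) _ (hlt j hj (2 * b) (by omega)) hab
    omega
  have hCc : ∀ j, (C j).card ≤ 2 * t - 1 := by
    intro j
    exact card_image_le.trans (by simp)
  have hdisj : ∀ i ∈ S, ∀ j ∈ S, i ≠ j → Disjoint (C i) (C j) := by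
    intro i hi j hj hij
    rw [disjoint_left]
    intro v hv hv'
    obtain ⟨a, ha, rfl⟩ := mem_image.1 hv
    obtain ⟨b, hb, hab⟩ := mem_image.1 hv'
    have ha := mem_range.1 ha
    have hb := mem_range.1 hb
    have e := hinjN _ (hlt j hj b (by omega)) _ (hlt i hi a (by omega)) hab
    apply hij
    rcases lt_trichotomy i j with h | h | h
    · have : (i + 1) * K ≤ j * K := Nat.mul_le_mul_right K h
      rw [Nat.add_mul] at this
      omega
    · exact h
    · have : (j + 1) * K ≤ i * K := Nat.mul_le_mul_right K h
      rw [Nat.add_mul] at this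
      omega
  have hclos : ∀ j ∈ S, IsClosure n σ (arc j) (C j) := by
    intro j hj
    refine ⟨⟨((j * K : ℕ) : ZMod n), 2 * t - 1, ?_⟩, harcC j, ?_⟩
    · simp only [C, Nat.cast_add]
    · rintro B ⟨i, m, rfl⟩ hsub
      refine (hCc j).trans ?_
      by_contra hlt2
      push Not at hlt2
      have hmn : m ≤ 2 * t - 2 := by
        by_contra hm
        have hinj : Set.InjOn (fun a : ℕ => σ (i + (a : ZMod n))) (range (2 * t - 1) : Finset ℕ) := by
          intro a ha b hb hab
          have ha := mem_range.1 (mem_coe.1 ha)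
          have hb := mem_range.1 (mem_coe.1 hb)
          have e := add_left_cancel (hbij.1 hab)
          rwa [ZMod.natCast_eq_natCast_iff', Nat.mod_eq_of_lt (by omega),
            Nat.mod_eq_of_lt (by omega)] at e
        have h1 := card_image_of_injOn hinj
        have h2 : (range (2 * t - 1)).image (fun a : ℕ => σ (i + (a : ZMod n))) ⊆
            (range m).image (fun a : ℕ => σ (i + (a : ZMod n))) :=
          image_subset_image (range_subset_range.2 (by omega))
        have h3 := card_le_card h2
        rw [h1, card_range] at h3
        omega
      have m1 : σ ((j * K + 2 * 0 : ℕ) : ZMod n) ∈ arc j :=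
        mem_image.2 ⟨0, mem_range.2 (by omega), rfl⟩
      have m2 : σ ((j * K + 2 * (t - 1) : ℕ) : ZMod n) ∈ arc j :=
        mem_image.2 ⟨t - 1, mem_range.2 (by omega), rfl⟩
      obtain ⟨a, ha, hae⟩ := mem_image.1 (hsub m1)
      obtain ⟨b, hb, hbe⟩ := mem_image.1 (hsub m2)
      have ha := mem_range.1 ha
      have hb := mem_range.1 hb
      have ea := hbij.1 hae
      have eb := hbij.1 hbe
      have e : ((a + 2 * (t - 1) : ℕ) : ZMod n) = (b : ZMod n) := by
        push_cast at ea eb ⊢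
        linear_combination ea - eb
      rw [ZMod.natCast_eq_natCast_iff', Nat.mod_eq_of_lt (by omega),
            Nat.mod_eq_of_lt (by omega)] at e
      omega
  have hex : ∀ A : Finset V, ∃ j : ℕ, A ∈ S.image arc → j ∈ S ∧ arc j = A := by
    intro A
    by_cases h : A ∈ S.image arc
    · obtain ⟨j, hj, e⟩ := mem_image.1 h
      exact ⟨j, fun _ => ⟨hj, e⟩⟩
    · exact ⟨0, fun h' => absurd h' h⟩
  choose f hf using hex
  refine ⟨⟨S.image arc, fun A => C (f A), ?_, ?_, ?_, ?_⟩, ?_, ?_, ?_⟩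
  · intro A hA
    have h := hclos (f A) (hf A hA).1
    rwa [(hf A hA).2] at h
  · intro A hA B hB hAB
    refine hdisj _ (hf A hA).1 _ (hf B hB).1 (fun e => hAB ?_)
    rw [← (hf A hA).2, ← (hf B hB).2, e]
  · intro A hA v hv hprob
    obtain ⟨a, ha, rfl⟩ := mem_image.1 hv
    have ha := mem_range.1 ha
    exact (mem_filter.1 (hf A hA).1).2 a (by omega) (mem_filter.2 ⟨mem_univ _, hprob⟩)
  · intro A hA u hu v hv huv hcon
    obtain ⟨j, hj, rfl⟩ := mem_image.1 hA
    obtain ⟨a, ha, rfl⟩ := mem_image.1 hu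
    obtain ⟨b, hb, rfl⟩ := mem_image.1 hv
    have ha := mem_range.1 ha
    have hb := mem_range.1 hb
    have key : ∀ a b : ℕ, a < t → b < t →
        ((j * K + 2 * a : ℕ) : ZMod n) + 1 = ((j * K + 2 * b : ℕ) : ZMod n) → False := by
      intro a b ha hb e
      have e : ((2 * a + 1 : ℕ) : ZMod n) = ((2 * b : ℕ) : ZMod n) := by
        push_cast at e ⊢
        linear_combination e
      rw [ZMod.natCast_eq_natCast_iff', Nat.mod_eq_of_lt (by omega),
            Nat.mod_eq_of_lt (by omega)] at e
      omega
    obtain ⟨i, ⟨h1, h2⟩ | ⟨h1, h2⟩⟩ := hcon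
    · have h1 := hbij.1 h1
      subst h1
      exact key a b ha hb (hbij.1 h2)
    · have h1 := hbij.1 h1
      subst h1
      exact key b a hb ha (hbij.1 h2)
  · intro A hA
    have := hCc (f A)
    show (C (f A)).card ≤ k
    omega
  · show n / K ≤ (S.image arc).card + 23 * k ^ 2
    rw [card_image_of_injOn]
    · omega
    · intro i hi j hj hij
      by_contra hne
      have hd := hdisj i hi j hj hne
      have hm : σ ((i * K + 2 * 0 : ℕ) : ZMod n) ∈ arc i :=
        mem_image.2 ⟨0, mem_range.2 (by omega), rfl⟩
      exact disjoint_left.1 hd (harcC i hm) (harcC j (hij ▸ hm))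
  · intro A hA
    obtain ⟨j, hj, rfl⟩ := mem_image.1 hA
    exact harcc j hj

/-- For all `c₁, c₂ > 0` there is `c > 0` such that under Assumption (★)
with constant `c`, `G` contains an independent arc-system of size at least `c₁·k²` and
length at least `c₂·k^(1/5)`. -/
theorem statement5 :
    ∀ c₁ c₂ : ℝ, 0 < c₁ → 0 < c₂ →
      ∃ c : ℝ, 0 < c ∧
        ∀ (V : Type) [Fintype V] [DecidableEq V] (G : SimpleGraph V) [DecidableRel G.Adj]
          (n k : ℕ) (σ : ZMod n → V) (W : Finset V),
          StarAssumption G n k σ W c →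
          ∃ 𝒜 : ArcSystem G n k σ W, 𝒜.Independent ∧
            c₁ * (k : ℝ) ^ 2 ≤ (𝒜.arcs.card : ℝ) ∧
            ∀ A ∈ 𝒜.arcs, c₂ * (k : ℝ) ^ ((1 : ℝ) / 5) ≤ (A.card : ℝ) := by
  intro c₁ c₂ hc₁ hc₂
  choose N hN using small_case
  obtain ⟨k0, hk0⟩ := exists_nat_ge ((2 * (c₂ + 1)) ^ 5)
  refine ⟨2 * (c₂ + 1) * (c₁ + 24) + ((∑ k ∈ range k0, N k : ℕ) : ℝ), by positivity, ?_⟩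
  intro V _ _ G _ n k σ W hstar
  obtain ⟨hcard, hσ, hind, hW, hno, hn⟩ := hstar
  have hk1 : 1 ≤ k := by
    have := hind {σ 0} (by simp)
    simpa using this
  have hn0 : 0 < n := by
    rw [← hcard]
    exact Fintype.card_pos_iff.2 ⟨σ 0⟩
  have hk1' : (1 : ℝ) ≤ k := by exact_mod_cast hk1
  obtain ⟨x, hx⟩ : ∃ x : ℝ, x = (k : ℝ) ^ ((1 : ℝ) / 5) := ⟨_, rfl⟩
  have hx1 : 1 ≤ x := by
    rw [hx]
    exact Real.one_le_rpow hk1' (by norm_num)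
  have hx5 : x ^ 5 = k := by
    rw [hx, ← Real.rpow_natCast, ← Real.rpow_mul (by positivity)]
    norm_num
  have hx11 : (k : ℝ) ^ ((11 : ℝ) / 5) = k ^ 2 * x := by
    rw [hx, ← Real.rpow_natCast, ← Real.rpow_add (by positivity)]
    norm_num
  rw [hx11] at hn
  rw [← hx]
  have hk2 : (1 : ℝ) ≤ (k : ℝ) ^ 2 := one_le_pow₀ hk1'
  have hS0 : (0 : ℝ) ≤ ((∑ k ∈ range k0, N k : ℕ) : ℝ) := by positivity
  rcases Nat.lt_or_ge k k0 with hlt | hge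
  · exfalso
    apply hno
    refine hN k V G n σ W hn0 ?_ hσ hind hW
    have h1 : N k ≤ ∑ k ∈ range k0, N k :=
      single_le_sum (f := N) (fun _ _ => Nat.zero_le _) (mem_range.2 hlt)
    have h2 : ((∑ k ∈ range k0, N k : ℕ) : ℝ) ≤ n := by
      have h3 : (1 : ℝ) ≤ k ^ 2 * x := by nlinarith
      have h4 : (0 : ℝ) ≤ 2 * (c₂ + 1) * (c₁ + 24) := by positivity
      nlinarith
    exact h1.trans (by exact_mod_cast h2)
  · have hxb : 2 * (c₂ + 1) ≤ x := by
      have h1 : (2 * (c₂ + 1)) ^ 5 ≤ x ^ 5 := by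
        rw [hx5]
        exact hk0.trans (by exact_mod_cast hge)
      exact le_of_pow_le_pow_left₀ (by norm_num) (by linarith) h1
    set t := ⌈c₂ * x⌉₊ with ht
    have ht1 : c₂ * x ≤ t := Nat.le_ceil _
    have ht2 : (t : ℝ) < c₂ * x + 1 := Nat.ceil_lt_add_one (by positivity)
    have ht3 : (t : ℝ) ≤ (c₂ + 1) * x := by nlinarith
    have ht0 : 1 ≤ t := Nat.one_le_iff_ne_zero.2 (by
      have : 0 < t := Nat.ceil_pos.2 (by positivity)
      omega)
    have htk : 2 * t ≤ k := by
      have h1 : (2 * t : ℝ) ≤ x * x := by nlinarith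
      have h2 : x * x ≤ x ^ 5 := by
        have : x ^ 2 ≤ x ^ 5 := pow_le_pow_right₀ hx1 (by norm_num)
        nlinarith
      have : (2 * t : ℝ) ≤ k := by rw [← hx5]; linarith
      exact_mod_cast this
    have hnt : (c₁ + 24) * (k : ℝ) ^ 2 * (2 * t) ≤ n := by
      have h0 : (0 : ℝ) ≤ (c₁ + 24) * (k : ℝ) ^ 2 := by positivity
      have h1 : (c₁ + 24) * (k : ℝ) ^ 2 * (2 * t) ≤ (c₁ + 24) * (k : ℝ) ^ 2 * (2 * ((c₂ + 1) * x)) :=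
        mul_le_mul_of_nonneg_left (by linarith) h0
      have h2 : (0 : ℝ) ≤ ((∑ k ∈ range k0, N k : ℕ) : ℝ) * (k ^ 2 * x) := by positivity
      nlinarith
    have htn : 4 * t ≤ n := by
      have h1 : (24 : ℝ) ≤ (c₁ + 24) * (k : ℝ) ^ 2 := by nlinarith
      have h2 : (0 : ℝ) ≤ 2 * t := by positivity
      have : (4 * t : ℝ) ≤ n := by nlinarith
      exact_mod_cast this
    obtain ⟨𝒜, hI, hc, hl⟩ := large_case G n k σ W t ht0 htk htn hσ hind hW
    refine ⟨𝒜, hI, ?_, ?_⟩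
    · have h1 : n < (n / (2 * t) + 1) * (2 * t) := by
        have := Nat.lt_div_mul_add (a := n) (b := 2 * t) (by omega)
        rw [Nat.add_mul]
        omega
      have h2 : n < (𝒜.arcs.card + 23 * k ^ 2 + 1) * (2 * t) :=
        h1.trans_le (Nat.mul_le_mul_right _ (by omega))
      have h3 : (n : ℝ) < ((𝒜.arcs.card : ℝ) + 23 * k ^ 2 + 1) * (2 * t) := by exact_mod_cast h2
      have h4 := lt_of_mul_lt_mul_right (hnt.trans_lt h3) (by positivity)
      nlinarith
    · intro A hA
      rw [hl A hA]
      exact ht1
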